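/- Let G = (V,E) be a finite simple graph that is not a disjoint union of copies of K_2, and let v_1, v_2 ∈ V. Then H_{G_2(v_1,v_2)}^ψ ⊆ H_{G_3(v_1,v_2)}^ψ ⊆ H_{G_4(v_1,v_2)}^ψ ⊆ ⋯ ⊆ H_G^ψ. Moreover, if v_1 and v_2 are not adjacent in G, then H_{G_1(v_1,v_2)}^ψ ⊆ H_{G_2(v_1,v_2)}^ψ. -/

import Mathlib

open Set Matrix

noncomputable section

/-- Entrywise power function `x ↦ x^α` on nonnegative reals, with the convention `0^α := 0`. -/
def powEnt (α x : ℝ) : ℝ := if x = 0 then 0 else x ^ α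

/-- The odd extension `ψ_α(x) = sgn(x)|x|^α` of the power function, with `ψ_α(0) = 0`. -/
def psiF (α x : ℝ) : ℝ := Real.sign x * |x| ^ α

/-- The even extension `φ_α(x) = |x|^α` of the power function, with `φ_α(0) = 0`. -/
def phiF (α x : ℝ) : ℝ := if x = 0 then 0 else |x| ^ α

/-- `P_G(I)`: positive semidefinite matrices with entries in `I` and zeros outside
the edge pattern of `G`. -/
def PsetG {V : Type*} [Fintype V] (G : SimpleGraph V) (I : Set ℝ) :
    Set (Matrix V V ℝ) :=
  {A | A.PosSemidef ∧ (∀ i j, A i j ∈ I) ∧ ∀ i j, i ≠ j → ¬ G.Adj i j → A i j = 0}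

/-- `H_G`: the set of entrywise powers preserving `P_G([0,∞))`. -/
def HsetG {V : Type*} [Fintype V] (G : SimpleGraph V) : Set ℝ :=
  {α | ∀ A ∈ PsetG G (Ici (0 : ℝ)), A.map (powEnt α) ∈ PsetG G univ}

/-- `H_G^ψ`: the set of powers `α` such that `ψ_α` preserves `P_G(ℝ)`. -/
def HsetPsi {V : Type*} [Fintype V] (G : SimpleGraph V) : Set ℝ :=
  {α | ∀ A ∈ PsetG G univ, A.map (psiF α) ∈ PsetG G univ}

/-- `H_G^φ`: the set of powers `α` such that `φ_α` preserves `P_G(ℝ)`. -/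
def HsetPhi {V : Type*} [Fintype V] (G : SimpleGraph V) : Set ℝ :=
  {α | ∀ A ∈ PsetG G univ, A.map (phiF α) ∈ PsetG G univ}

/-- The set of which the critical exponent is the least element:
all `α` such that every `β ≥ α` lies in `H`. -/
def CEset (H : Set ℝ) : Set ℝ := {α | ∀ β, α ≤ β → β ∈ H}

/-- The positive integers, as a set of reals. -/
def posNats : Set ℝ := {x | ∃ k : ℕ, 0 < k ∧ x = k}

/-- The odd positive integers `−1+2ℕ`, as a set of reals. -/
def oddNats : Set ℝ := {x | ∃ k : ℕ, 0 < k ∧ x = 2 * k - 1}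

/-- The even positive integers `2ℕ`, as a set of reals. -/
def evenNats : Set ℝ := {x | ∃ k : ℕ, 0 < k ∧ x = 2 * k}

/-- `addPath G v₁ v₂ t`: the graph `G` together with an added path from `v₁` to `v₂` having
`t` new internal vertices (hence `t + 1` edges); for `t = 0` this adds the edge `v₁v₂`.
Thus `G_m(v₁,v₂)` of the paper is `addPath G v₁ v₂ (m−1)`. -/
def addPath {V : Type*} (G : SimpleGraph V) (v₁ v₂ : V) (t : ℕ) :
    SimpleGraph (V ⊕ Fin t) :=
  SimpleGraph.fromRel (fun x y =>
    match x, y with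
    | Sum.inl a, Sum.inl b => G.Adj a b ∨ (t = 0 ∧ a = v₁ ∧ b = v₂)
    | Sum.inl a, Sum.inr i => (a = v₁ ∧ (i : ℕ) = 0) ∨ (a = v₂ ∧ (i : ℕ) = t - 1)
    | Sum.inr i, Sum.inr j => (j : ℕ) = (i : ℕ) + 1
    | Sum.inr _, Sum.inl _ => False)

lemma psiF_zero (α : ℝ) : psiF α 0 = 0 := by simp [psiF]

lemma psiF_of_nonneg {α x : ℝ} (hα : α ≠ 0) (hx : 0 ≤ x) : psiF α x = x ^ α := by
  rcases hx.eq_or_lt with rfl | hx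
  · simp [psiF, hα]
  · simp [psiF, Real.sign_of_pos hx, abs_of_pos hx]

lemma psiF_neg (α x : ℝ) : psiF α (-x) = -psiF α x := by
  simp [psiF, Real.sign_neg]

lemma psiF_mul (α x y : ℝ) : psiF α (x * y) = psiF α x * psiF α y := by
  have hsign : Real.sign (x * y) = Real.sign x * Real.sign y := by
    rcases lt_trichotomy x 0 with hx | rfl | hx <;> rcases lt_trichotomy y 0 with hy | rfl | hy <;>
      simp [*, Real.sign_of_neg, Real.sign_of_pos, mul_pos_of_neg_of_neg, mul_neg_of_neg_of_pos,
        mul_neg_of_pos_of_neg]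
  rw [psiF, psiF, psiF, hsign, abs_mul, Real.mul_rpow (abs_nonneg x) (abs_nonneg y)]
  ring

lemma psiF_inv (α x : ℝ) : psiF α x⁻¹ = (psiF α x)⁻¹ := by
  rw [psiF, psiF, Real.sign_inv, abs_inv, Real.inv_rpow (abs_nonneg x), mul_inv, Real.inv_sign]

lemma psiF_div (α x y : ℝ) : psiF α (x / y) = psiF α x / psiF α y := by
  rw [div_eq_mul_inv, psiF_mul, psiF_inv, div_eq_mul_inv]

lemma psiF_sub_le {α x y : ℝ} (hα : 1 ≤ α) (hy : 0 ≤ y) (hyx : y ≤ x) :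
    psiF α (x - y) ≤ psiF α x - psiF α y := by
  have hα0 : α ≠ 0 := by linarith
  rw [psiF_of_nonneg hα0 (sub_nonneg.2 hyx), psiF_of_nonneg hα0 (hy.trans hyx),
    psiF_of_nonneg hα0 hy]
  have := Real.add_rpow_le_rpow_add (sub_nonneg.2 hyx) hy hα
  rw [sub_add_cancel] at this
  linarith

/-- `H^ψ` is antitone with respect to injective graph homomorphisms. -/
lemma HsetPsi_subset_of_injective {V W : Type*} [Fintype V] [Fintype W] {G : SimpleGraph V}
    {H : SimpleGraph W} {f : V → W} (hf : Function.Injective f)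
    (hGH : ∀ i j, G.Adj i j → H.Adj (f i) (f j)) : HsetPsi H ⊆ HsetPsi G := by
  classical
  intro α hα A hA
  let M : Matrix W V ℝ := of fun w v => if f v = w then 1 else 0
  have hentry : ∀ x y, (M * A * Mᴴ) x y =
      ∑ j, (∑ i, if f i = x then A i j else 0) * if f j = y then 1 else 0 := by
    intro x y
    simp [M, Matrix.mul_apply, ite_mul]
  have hsub : (M * A * Mᴴ).submatrix f f = A := by
    ext i j
    rw [submatrix_apply, hentry]
    simp [hf.eq_iff]
  have hB : M * A * Mᴴ ∈ PsetG H univ := by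
    refine ⟨hA.1.mul_mul_conjTranspose_same M, fun _ _ => mem_univ _, fun x y hxy hadj => ?_⟩
    rw [hentry]
    refine Finset.sum_eq_zero fun j _ => ?_
    by_cases hj : f j = y
    · rw [Finset.sum_eq_zero, zero_mul]
      intro i _
      split_ifs with hi
      · subst hi hj
        exact hA.2.2 i j (fun h => hxy (congrArg f h)) fun h => hadj (hGH i j h)
      · rfl
    · simp [hj]
  refine ⟨?_, fun _ _ => mem_univ _, fun i j hij hadj => ?_⟩
  · have := (hα _ hB).1.submatrix f
    rwa [submatrix_map, hsub] at this
  · rw [map_apply, hA.2.2 i j hij hadj, psiF_zero]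

/-- A graph containing a path on three vertices only admits exponents at least `1`. -/
lemma one_le_of_mem_HsetPsi {V : Type*} [Fintype V] {G : SimpleGraph V} {x y z : V}
    (hxy : G.Adj x y) (hxz : G.Adj x z) (hyz : y ≠ z) {α : ℝ} (hα : α ∈ HsetPsi G) : 1 ≤ α := by
  classical
  let u : V → ℝ := fun i => if i = x ∨ i = y then 1 else 0
  let w : V → ℝ := fun i => if i = x ∨ i = z then 1 else 0
  have hA : vecMulVec u u + vecMulVec w w ∈ PsetG G univ := by
    refine ⟨?_, fun _ _ => mem_univ _, fun i j hij hadj => ?_⟩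
    · simpa using (posSemidef_vecMulVec_self_star u).add (posSemidef_vecMulVec_self_star w)
    · have huw : ∀ i j, i ≠ j → ¬ G.Adj i j → ∀ t, G.Adj x t →
          (i = x ∨ i = t) → ¬ (j = x ∨ j = t) := by
        rintro i j hij hadj t ht (rfl | rfl) (rfl | rfl)
        exacts [hij rfl, hadj ht, hadj ht.symm, hij rfl]
      have hu : u i * u j = 0 := by
        simp only [u]
        split_ifs with h1 h2 <;> simp
        exact huw i j hij hadj y hxy h1 h2
      have hw : w i * w j = 0 := by
        simp only [w]
        split_ifs with h1 h2 <;> simp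
        exact huw i j hij hadj z hxz h1 h2
      simp [vecMulVec_apply, hu, hw]
  have h := ((hα _ hA).1.submatrix ![x, y, z]).dotProduct_mulVec_nonneg ![1, -1, -1]
  have h1 : psiF α 1 = 1 := by simp [psiF]
  have h2 : psiF α 2 = 2 ^ α := by simp [psiF, Real.sign_of_pos]
  simp [u, w, Matrix.mulVec, dotProduct, Fin.sum_univ_three, vecMulVec_apply, psiF_zero,
    hxy.ne, hxz.ne, hxy.ne', hxz.ne', hyz, hyz.symm, h1, one_add_one_eq_two, h2] at h
  have h3 : (2 : ℝ) ^ (1 : ℝ) ≤ 2 ^ α := by rw [Real.rpow_one]; linarith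
  exact (Real.rpow_le_rpow_left_iff one_lt_two).1 h3

/-- The Schur complement of the last diagonal entry; with `x / 0 = 0` it is the leading block
when that entry vanishes. -/
def schurLast {W : Type*} (M : Matrix (W ⊕ Fin 1) (W ⊕ Fin 1) ℝ) : Matrix W W ℝ :=
  of fun i j => M (.inl i) (.inl j) -
    M (.inl i) (.inr 0) * M (.inl j) (.inr 0) / M (.inr 0) (.inr 0)

lemma posSemidef_apply_comm {W : Type*} {M : Matrix W W ℝ} (hM : M.PosSemidef) (i j : W) :
    M i j = M j i := by
  simpa using hM.1.apply j i

lemma posSemidef_schurLast {W : Type*} [Fintype W]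
    {M : Matrix (W ⊕ Fin 1) (W ⊕ Fin 1) ℝ} (hM : M.PosSemidef) : (schurLast M).PosSemidef := by
  classical
  by_cases hd : M (.inr 0) (.inr 0) = 0
  · convert hM.submatrix (Sum.inl : W → W ⊕ Fin 1) using 1
    ext i j
    simp [schurLast, hd]
  · let C : Matrix W (W ⊕ Fin 1) ℝ := of fun i => Sum.elim (fun j => if i = j then 1 else 0)
      fun _ => -(M (.inl i) (.inr 0) / M (.inr 0) (.inr 0))
    convert hM.mul_mul_conjTranspose_same C using 1
    ext i j
    have hc := posSemidef_apply_comm hM (.inr 0) (.inl j)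
    simp [schurLast, C, Matrix.mul_apply, Fintype.sum_sum_type, hc]
    field_simp
    ring

lemma posSemidef_of_schurLast {W : Type*} [Fintype W]
    {M : Matrix (W ⊕ Fin 1) (W ⊕ Fin 1) ℝ} (hsymm : ∀ i j, M i j = M j i)
    (hd : 0 ≤ M (.inr 0) (.inr 0)) (hb : M (.inr 0) (.inr 0) = 0 → ∀ i, M (.inl i) (.inr 0) = 0)
    (hS : (schurLast M).PosSemidef) : M.PosSemidef := by
  classical
  let C : Matrix (W ⊕ Fin 1) W ℝ := of fun x j => Sum.elim (fun i => if i = j then 1 else 0)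
      (fun _ => 0) x
  have hcol := (posSemidef_vecMulVec_self_star (fun x => M x (.inr 0))).smul (inv_nonneg.2 hd)
  convert (hS.mul_mul_conjTranspose_same C).add hcol using 1
  ext x y
  by_cases h0 : M (.inr 0) (.inr 0) = 0
  · rcases x with x | x <;> rcases y with y | y <;>
      simp [schurLast, C, Matrix.mul_apply, h0, hb h0, hsymm (.inr _) (.inl _),
        Subsingleton.elim _ (0 : Fin 1)]
  · rcases x with x | x <;> rcases y with y | y <;>
      simp [schurLast, C, Matrix.mul_apply, vecMulVec_apply, hsymm (.inr _) (.inl _),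
        Subsingleton.elim _ (0 : Fin 1), h0]
    all_goals field_simp
    ring

lemma posSemidef_apply_eq_zero {W : Type*} [Fintype W] {M : Matrix W W ℝ} (hM : M.PosSemidef)
    {u : W} (hu : M u u = 0) (i : W) : M i u = 0 := by
  have h := (hM.submatrix ![i, u]).det_nonneg
  rw [Matrix.det_fin_two] at h
  simp only [submatrix_apply, cons_val_zero, cons_val_one, hu, posSemidef_apply_comm hM u i,
    mul_zero, zero_sub] at h
  exact mul_self_eq_zero.1 (le_antisymm (neg_nonneg.1 h) (mul_self_nonneg _))

/-- If the neighbourhood of the last vertex of `H` is independent and `G` arises from `H` by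
deleting that vertex and joining its neighbours, then `H^ψ_G ⊆ H^ψ_H` for exponents at
least `1`. -/
lemma mem_HsetPsi_of_delete_vertex {W : Type*} [Fintype W] {G : SimpleGraph W}
    {H : SimpleGraph (W ⊕ Fin 1)} (hHG : ∀ i j, H.Adj (.inl i) (.inl j) → G.Adj i j)
    (hnbr : ∀ i j, i ≠ j → H.Adj (.inl i) (.inr 0) → H.Adj (.inl j) (.inr 0) →
      G.Adj i j ∧ ¬ H.Adj (.inl i) (.inl j))
    {α : ℝ} (hα1 : 1 ≤ α) (hα : α ∈ HsetPsi G) : α ∈ HsetPsi H := by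
  classical
  intro A hA
  refine ⟨?_, fun _ _ => mem_univ _, fun i j hij hadj => by
    rw [map_apply, hA.2.2 i j hij hadj, psiF_zero]⟩
  have hα0 : α ≠ 0 := by linarith
  have hd : 0 ≤ A (.inr 0) (.inr 0) := hA.1.diag_nonneg
  have hcol : ∀ i, ¬ H.Adj (.inl i) (.inr 0) → A (.inl i) (.inr 0) = 0 :=
    fun i => hA.2.2 _ _ (by simp)
  have hS := posSemidef_schurLast hA.1
  have hSG : schurLast A ∈ PsetG G univ := by
    refine ⟨hS, fun _ _ => mem_univ _, fun i j hij hadj => ?_⟩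
    have h1 : A (.inl i) (.inl j) = 0 := hA.2.2 _ _ (by simpa using hij) fun h => hadj (hHG i j h)
    have h2 : A (.inl i) (.inr 0) * A (.inl j) (.inr 0) = 0 := by
      by_contra h
      exact hadj (hnbr i j hij (not_imp_comm.1 (hcol i) (left_ne_zero_of_mul h))
        (not_imp_comm.1 (hcol j) (right_ne_zero_of_mul h))).1
    simp [schurLast, h1, h2]
  refine posSemidef_of_schurLast (fun i j => ?_) ?_ (fun h i => ?_) ?_
  · rw [map_apply, map_apply, posSemidef_apply_comm hA.1]
  · rw [map_apply, psiF_of_nonneg hα0 hd]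
    exact Real.rpow_nonneg hd α
  · rw [map_apply, psiF_of_nonneg hα0 hd, Real.rpow_eq_zero hd hα0] at h
    rw [map_apply, posSemidef_apply_eq_zero hA.1 h, psiF_zero]
  · have hdiag : (diagonal fun i => schurLast (A.map (psiF α)) i i
        - psiF α (schurLast A i i)).PosSemidef := by
      refine .diagonal fun i => sub_nonneg.2 ?_
      have hi : 0 ≤ schurLast A i i := hS.diag_nonneg
      simp only [schurLast, of_apply, map_apply, ← psiF_mul, ← psiF_div] at hi ⊢
      exact psiF_sub_le hα1 (div_nonneg (mul_self_nonneg _) hd) (sub_nonneg.1 hi)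
    convert (hα _ hSG).1.add hdiag using 1
    ext i j
    by_cases hij : i = j
    · subst hij
      simp
    · simp only [schurLast, Matrix.add_apply, of_apply, map_apply, diagonal_apply_ne _ hij,
        add_zero, ← psiF_mul, ← psiF_div]
      by_cases h : A (.inl i) (.inr 0) * A (.inl j) (.inr 0) = 0
      · simp [h, psiF_zero]
      · have h0 : A (.inl i) (.inl j) = 0 := hA.2.2 _ _ (by simpa using hij)
          (hnbr i j hij (not_imp_comm.1 (hcol i) (left_ne_zero_of_mul h))
            (not_imp_comm.1 (hcol j) (right_ne_zero_of_mul h))).2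
        simp [h0, psiF_zero, psiF_neg]

lemma HsetPsi_addPath_subset_succ {V : Type*} [Fintype V] {G : SimpleGraph V}
    (hG : ¬ ∀ ⦃x y z : V⦄, G.Adj x y → G.Adj x z → y = z) {v₁ v₂ : V} (hv : v₁ ≠ v₂) {t : ℕ}
    (ht : t = 0 → ¬ G.Adj v₁ v₂) :
    HsetPsi (addPath G v₁ v₂ t) ⊆ HsetPsi (addPath G v₁ v₂ (t + 1)) := by
  intro α hα
  have hinl : ∀ a b, G.Adj a b → (addPath G v₁ v₂ t).Adj (.inl a) (.inl b) := fun a b h => by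
    simp [addPath, h, h.ne]
  have hα1 : 1 ≤ α := by
    push Not at hG
    obtain ⟨x, y, z, hxy, hxz, hyz⟩ := hG
    exact one_le_of_mem_HsetPsi (hinl x y hxy) (hinl x z hxz) (by simpa using hyz) hα
  let e : (V ⊕ Fin t) ⊕ Fin 1 ≃ V ⊕ Fin (t + 1) :=
    (Equiv.sumAssoc V (Fin t) (Fin 1)).trans ((Equiv.refl V).sumCongr finSumFinEquiv)
  have hcomap : α ∈ HsetPsi ((addPath G v₁ v₂ (t + 1)).comap e) := by
    refine mem_HsetPsi_of_delete_vertex ?_ ?_ hα1 hα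
    · rintro (a | i) (b | j) <;> simp [e, addPath] <;> grind
    · rintro (a | i) (b | j) <;> simp [e, addPath] <;> grind [SimpleGraph.Adj.symm]
  refine HsetPsi_subset_of_injective e.symm.injective (fun i j h => ?_) hcomap
  simpa using h

/-- **Corollary 4.8**: for `G` not a disjoint union of copies of `K_2` and vertices
`v₁ ≠ v₂`, one has `H^ψ_{G_2(v₁,v₂)} ⊆ H^ψ_{G_3(v₁,v₂)} ⊆ ⋯ ⊆ H^ψ_G`, and
`H^ψ_{G_1(v₁,v₂)} ⊆ H^ψ_{G_2(v₁,v₂)}` when `v₁, v₂` are not adjacent. -/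
theorem Hset_path_addition {V : Type*} [Fintype V] [DecidableEq V] (G : SimpleGraph V)
    (hG : ¬ ∀ ⦃x y z : V⦄, G.Adj x y → G.Adj x z → y = z)
    (v₁ v₂ : V) (hv : v₁ ≠ v₂) :
    (∀ m : ℕ, 2 ≤ m →
      HsetPsi (addPath G v₁ v₂ (m - 1)) ⊆ HsetPsi (addPath G v₁ v₂ m)) ∧
    (∀ m : ℕ, 2 ≤ m → HsetPsi (addPath G v₁ v₂ (m - 1)) ⊆ HsetPsi G) ∧
    (¬ G.Adj v₁ v₂ →
      HsetPsi (addPath G v₁ v₂ 0) ⊆ HsetPsi (addPath G v₁ v₂ 1)) := by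
  refine ⟨fun m hm => ?_, fun m _ => ?_, fun hadj => ?_⟩
  · obtain ⟨t, rfl⟩ : ∃ t, m = t + 1 := ⟨m - 1, by omega⟩
    exact HsetPsi_addPath_subset_succ hG hv fun h => by omega
  · exact HsetPsi_subset_of_injective Sum.inl_injective fun i j h => by simp [addPath, h, h.ne]
  · exact HsetPsi_addPath_subset_succ hG hv fun _ => hadj
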